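/- arXiv:2108.13927 — 3 statements merged into one kernel-verified Lean document; each statement's English description precedes it below -/
import Mathlib

section
/- For every natural number c and every integer n ≥ c+2, the partial finite automaton C_n^c has a synchronizing word. -/
/-- Partial transition function of the PFA `C_n^c`. `false` is letter `a`, `true` is letter `b`. -/
def cernyStep (c n q : ℕ) : Bool → Option ℕ
  | false =>
      if q ≤ n - c - 1 then some (q + 1)
      else if q = n then some 1 else none
  | true =>
      if q ≤ n - c - 1 then some q
      else if q = n then some 1 else some (q + 1)

/-- Action of a word on a state (`none` if undefined at some step). -/
def cernyRun (c n : ℕ) (q : ℕ) (w : List Bool) : Option ℕ :=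
  List.foldlM (cernyStep c n) q w

/-- A word is synchronizing for `C_n^c`. -/
def IsSync (c n : ℕ) (w : List Bool) : Prop :=
  ∃ qs : ℕ, ∀ q ∈ Finset.Icc 1 n, cernyRun c n q w = some qs

/-!
Write `n = m + c + 1`. The word `b ^ (c + 1)` fixes `1, …, m` and sends every other state to `1`,
so `r = a b ^ (c + 1)` rotates `1, …, m` cyclically and sends `n` to `1`. Hence `r ^ m` fixes
`1, …, m`, while it sends `n` to `1` and then on to `m`. As `a b ^ c` maps `q` to `q + 1` for
`q < m` and `m` to `n`, the word `a b ^ c r ^ m` acts on `1, …, m` as `q ↦ min (q + 1) m`, and its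
`m`-th power sends all of these states to `m`.
-/

section Orbit

universe u v w

variable {α : Type u} {σ : Type v} {M : Type v → Type w} [Monad M] [LawfulMonad M]
  {f : σ → α → M σ}

theorem foldlM_flatten_replicate_of_orbit (w : List α) (s : ℕ → σ) {k : ℕ}
    (h : ∀ i < k, w.foldlM f (s i) = pure (s (i + 1))) :
    (List.replicate k w).flatten.foldlM f (s 0) = pure (s k) := by
  induction k with
  | zero => rfl
  | succ k ih =>
    have hk := ih fun i hi => h i (hi.trans k.lt_succ_self)
    simp [List.replicate_succ', hk, h k k.lt_succ_self]

theorem foldlM_replicate_of_orbit (a : α) (s : ℕ → σ) {k : ℕ}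
    (h : ∀ i < k, f (s i) a = pure (s (i + 1))) :
    (List.replicate k a).foldlM f (s 0) = pure (s k) := by
  simpa using foldlM_flatten_replicate_of_orbit [a] s (f := f) (by simpa using h)

end Orbit

theorem cernyRun_append {c n q p : ℕ} {v : List Bool} (h : cernyRun c n q v = some p)
    (w : List Bool) : cernyRun c n q (v ++ w) = cernyRun c n p w := by
  unfold cernyRun at h ⊢
  simp [h]

theorem cernyRun_cons {c n q p : ℕ} {l : Bool} (h : cernyStep c n q l = some p)
    (w : List Bool) : cernyRun c n q (l :: w) = cernyRun c n p w := by
  simp [cernyRun, h]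

section States

variable {c m q : ℕ}

theorem cernyStep_false_of_le (hq : q ≤ m) : cernyStep c (m + c + 1) q false = some (q + 1) :=
  if_pos (by omega)

theorem cernyStep_false_last : cernyStep c (m + c + 1) (m + c + 1) false = some 1 :=
  (if_neg (by omega)).trans (if_pos rfl)

theorem cernyStep_true_of_le (hq : q ≤ m) : cernyStep c (m + c + 1) q true = some q :=
  if_pos (by omega)

theorem cernyStep_true_of_lt (hmq : m < q) (hq : q < m + c + 1) :
    cernyStep c (m + c + 1) q true = some (q + 1) :=
  (if_neg (by omega)).trans (if_neg hq.ne)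

theorem cernyStep_true_last : cernyStep c (m + c + 1) (m + c + 1) true = some 1 :=
  (if_neg (by omega)).trans (if_pos rfl)

theorem cernyRun_replicate_true_of_le (hq : q ≤ m) (k : ℕ) :
    cernyRun c (m + c + 1) q (List.replicate k true) = some q :=
  foldlM_replicate_of_orbit true (fun _ => q) fun _ _ => cernyStep_true_of_le hq

theorem cernyRun_replicate_true_of_lt {k : ℕ} (hmq : m < q) (hq : q + k ≤ m + c + 1) :
    cernyRun c (m + c + 1) q (List.replicate k true) = some (q + k) :=
  foldlM_replicate_of_orbit true (q + ·) fun _ _ => cernyStep_true_of_lt (by omega) (by omega)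

theorem cernyRun_replicate_true_succ (hm : 1 ≤ m) (hq : q ≤ m + c + 1) :
    cernyRun c (m + c + 1) q (List.replicate (c + 1) true) = some (if q ≤ m then q else 1) := by
  split_ifs with hqm
  · exact cernyRun_replicate_true_of_le hqm _
  · obtain ⟨j, hj⟩ := Nat.exists_eq_add_of_le hq
    obtain ⟨k, hk⟩ : ∃ k, c + 1 = j + (k + 1) := ⟨q - m - 1, by omega⟩
    -- The run climbs from `q` to `m + c + 1`, wraps around to `1` and stays there.
    have climb := cernyRun_replicate_true_of_lt (not_le.mp hqm) hj.ge
    rw [hk, ← List.replicate_append_replicate, cernyRun_append climb, ← hj, List.replicate_succ,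
      cernyRun_cons cernyStep_true_last, cernyRun_replicate_true_of_le hm]

/-- The word `a b ^ (c + 1)`, which permutes the states `1, …, m` of the automaton with
`m + c + 1` states cyclically. -/
def rotationWord (c : ℕ) : List Bool :=
  false :: List.replicate (c + 1) true

theorem cernyRun_rotationWord_of_le (hm : 1 ≤ m) (hq : q ≤ m) :
    cernyRun c (m + c + 1) q (rotationWord c) = some (q % m + 1) := by
  rw [rotationWord, cernyRun_cons (cernyStep_false_of_le hq),
    cernyRun_replicate_true_succ hm (by omega)]
  rcases hq.eq_or_lt with rfl | hlt
  · simp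
  · simp [Nat.mod_eq_of_lt hlt, hlt]

theorem cernyRun_rotationWord_last (hm : 1 ≤ m) :
    cernyRun c (m + c + 1) (m + c + 1) (rotationWord c) = some 1 := by
  rw [rotationWord, cernyRun_cons cernyStep_false_last, cernyRun_replicate_true_of_le hm]

theorem cernyRun_rotationWord_pow_of_le (hq₁ : 1 ≤ q) (hq : q ≤ m) :
    cernyRun c (m + c + 1) q (List.replicate m (rotationWord c)).flatten = some q := by
  obtain ⟨p, rfl⟩ := Nat.exists_eq_add_of_le' hq₁
  have hrotate (i : ℕ) : cernyRun c (m + c + 1) ((p + i) % m + 1) (rotationWord c) =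
      some ((p + (i + 1)) % m + 1) := by
    have hlt : (p + i) % m + 1 ≤ m := Nat.mod_lt _ (by omega)
    rw [cernyRun_rotationWord_of_le (by omega) hlt, Nat.mod_add_mod, add_assoc]
  have horbit := foldlM_flatten_replicate_of_orbit (k := m) (rotationWord c)
    (fun i => (p + i) % m + 1) fun i _ => hrotate i
  simpa [cernyRun, Nat.mod_eq_of_lt hq] using horbit

theorem cernyRun_rotationWord_pow_last (hm : 1 ≤ m) :
    cernyRun c (m + c + 1) (m + c + 1) (List.replicate m (rotationWord c)).flatten = some m := by
  obtain ⟨k, hk⟩ := Nat.exists_eq_add_of_le' hm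
  have hsplit : (List.replicate m (rotationWord c)).flatten =
      rotationWord c ++ (List.replicate k (rotationWord c)).flatten := by
    rw [hk, List.replicate_succ, List.flatten_cons]
  have hone : cernyRun c (m + c + 1) m (rotationWord c) = some 1 := by
    rw [cernyRun_rotationWord_of_le hm le_rfl, Nat.mod_self]
  -- The first rotation merges `m + c + 1` with `m`, which the `m`-th power fixes.
  have hfix := cernyRun_rotationWord_pow_of_le (c := c) hm le_rfl
  rw [hsplit, cernyRun_append hone] at hfix
  rw [hsplit, cernyRun_append (cernyRun_rotationWord_last hm), hfix]

/-- The word `a b ^ c r ^ m` with `r` the rotation word. On the states `1, …, m` of the automaton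
with `m + c + 1` states it acts as the successor map truncated at `m`. -/
def shiftWord (c m : ℕ) : List Bool :=
  false :: (List.replicate c true ++ (List.replicate m (rotationWord c)).flatten)

theorem cernyRun_shiftWord (hq₁ : 1 ≤ q) (hq : q ≤ m) :
    cernyRun c (m + c + 1) q (shiftWord c m) = some (min (q + 1) m) := by
  rw [shiftWord, cernyRun_cons (cernyStep_false_of_le hq)]
  rcases hq.eq_or_lt with rfl | hlt
  · have climb : cernyRun c (q + c + 1) (q + 1) (List.replicate c true) = some (q + c + 1) := by
      rw [cernyRun_replicate_true_of_lt q.lt_succ_self (by omega), add_right_comm]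
    rw [cernyRun_append climb, cernyRun_rotationWord_pow_last hq₁, min_eq_right q.le_succ]
  · rw [cernyRun_append (cernyRun_replicate_true_of_le hlt c),
      cernyRun_rotationWord_pow_of_le q.succ_pos hlt, min_eq_left hlt]

theorem cernyRun_shiftWord_pow (hq₁ : 1 ≤ q) (hq : q ≤ m) (k : ℕ) :
    cernyRun c (m + c + 1) q (List.replicate k (shiftWord c m)).flatten =
      some (min (q + k) m) := by
  have hshift (i : ℕ) : cernyRun c (m + c + 1) (min (q + i) m) (shiftWord c m) =
      some (min (q + (i + 1)) m) := by
    rw [cernyRun_shiftWord (by omega) (min_le_right _ _)]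
    congr 1
    omega
  have horbit := foldlM_flatten_replicate_of_orbit (k := k) (shiftWord c m)
    (fun i => min (q + i) m) fun i _ => hshift i
  simpa [cernyRun, hq] using horbit

end States

/-- **Lemma.** For every `c : ℕ` and every `n ≥ c+2`, the PFA `C_n^c` has a synchronizing word. -/
theorem cerny_pfa_synchronizing (c n : ℕ) (hn : c + 2 ≤ n) :
    ∃ w : List Bool, IsSync c n w := by
  obtain ⟨m, rfl⟩ : ∃ m, n = m + c + 1 := ⟨n - c - 1, by omega⟩
  have hm : 1 ≤ m := by omega
  refine ⟨List.replicate (c + 1) true ++ (List.replicate m (shiftWord c m)).flatten, m,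
    fun q hq => ?_⟩
  obtain ⟨hq₁, hqn⟩ := Finset.mem_Icc.mp hq
  have hp : 1 ≤ (if q ≤ m then q else 1) ∧ (if q ≤ m then q else 1) ≤ m := by
    split_ifs <;> omega
  rw [cernyRun_append (cernyRun_replicate_true_succ hm hqn), cernyRun_shiftWord_pow hp.1 hp.2,
    min_eq_right (Nat.le_add_left m _)]
end

section
/- For every integer n ≥ 1, f_0(n) = n − 1; consequently, for every integer n ≥ 2, the reset threshold of the Černý automaton C_n^0 equals (n−1)². -/
/-- The reset threshold of `C_n^c`: minimal length of a synchronizing word. -/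
noncomputable def resetThreshold (c n : ℕ) : ℕ :=
  sInf { L : ℕ | ∃ w : List Bool, w.length = L ∧ IsSync c n w }

/-- The solution `f_c` of the pawn race problem:
`f_c(1) = 0` and `f_c(n) = min { f_c(i) + f_c(n-i) + (c+1)·n - i | 1 ≤ i ≤ n-1 }` for `n ≥ 2`. -/
def fc (c : ℕ) : ℕ → ℕ
  | 0 => 0
  | 1 => 0
  | n + 2 =>
      (Finset.Icc 1 (n + 1)).attach.inf'
        (Finset.attach_nonempty_iff.mpr ⟨1, by simp⟩)
        (fun i => fc c i.1 + fc c (n + 2 - i.1) + (c + 1) * (n + 2) - i.1)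
termination_by n => n
decreasing_by
  all_goals
    have h := i.2
    simp only [Finset.mem_Icc] at h
    omega

/-!
For `f_0`, by induction the `i`-th term of the minimum is `2 (n - 1) - i`, smallest at `i = n - 1`.

For the automaton, identify the state `n` with `0`, so that the states form `ZMod n`: then `a` is
`x ↦ x + 1`, and `b` moves only `0`, which jumps to `1`.

Lower bound. If a word `w` containing `A` letters `a` sends every state to `r`, then a state `x`
jumping `j` times satisfies `x + A + j = r`. For `x = r - A + 1` this gives `j ≡ -1 (mod n)`, hence
`j ≥ n - 1`. Since each jump after the first is preceded by a full turn of `n` letters,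
`|w| ≥ n (n - 2) + 1 = (n - 1) ^ 2`.

Upper bound. The word `b a^(n-1)` fixes `0` and sends `x` to `x - 1` otherwise, so its `(n - 2)`-nd
power sends every state to `0` or `1`, which the letter `b` merges.
-/

lemma fc_zero (n : ℕ) : fc 0 n = n - 1 := by
  induction n using Nat.strong_induction_on with
  | _ n ih =>
    match n, ih with
    | 0, _ | 1, _ => simp only [fc]
    | n + 2, ih =>
      have term_eq (i : ℕ) (hi : i ∈ Finset.Icc 1 (n + 1)) :
          fc 0 i + fc 0 (n + 2 - i) + (0 + 1) * (n + 2) - i = 2 * (n + 1) - i := by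
        obtain ⟨hi₁, hi₂⟩ := Finset.mem_Icc.mp hi
        rw [ih i (by omega), ih (n + 2 - i) (by omega)]
        omega
      rw [fc]
      apply le_antisymm
      · have last_mem : n + 1 ∈ Finset.Icc 1 (n + 1) := by simp
        refine (Finset.inf'_le _ (Finset.mem_attach _ ⟨n + 1, last_mem⟩)).trans ?_
        rw [term_eq _ last_mem]
        omega
      · refine Finset.le_inf' _ _ fun i _ => ?_
        rw [term_eq _ i.2]
        have := (Finset.mem_Icc.mp i.2).2
        omega

namespace Cerny

variable {n : ℕ}

section Residues

lemma val_sub_one [NeZero n] {x : ZMod n} (hx : x ≠ 0) : (x - 1).val = x.val - 1 := by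
  have val_pos : 0 < x.val := ZMod.val_pos.mpr hx
  have val_lt : x.val - 1 < n := (Nat.sub_le _ _).trans_lt x.val_lt
  simpa [Nat.cast_pred val_pos] using ZMod.val_natCast_of_lt val_lt

lemma val_le_val_sub_one_add_one [NeZero n] (x : ZMod n) : x.val ≤ (x - 1).val + 1 := by
  by_cases hx : x = 0
  · simp [hx]
  · rw [val_sub_one hx]
    omega

lemma val_neg_one [NeZero n] : (-1 : ZMod n).val = n - 1 := by
  obtain ⟨m, rfl⟩ := Nat.exists_eq_succ_of_ne_zero (NeZero.ne n)
  exact ZMod.val_neg_one m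

lemma sub_one_le_of_natCast_eq_neg_one {j : ℕ} (hj : (j : ZMod n) = -1) : n - 1 ≤ j := by
  have : n ∣ j + 1 := (ZMod.natCast_eq_zero_iff _ _).mp (by simp [hj])
  exact Nat.sub_le_of_le_add (Nat.le_of_dvd j.succ_pos this)

end Residues

/-- Transition function of the Černý automaton `C_n^0` on the state set `ZMod n`, where the residue
`0` plays the role of the state `n`. As in `cernyStep`, `false` is the letter `a` and `true` is the
letter `b`. -/
def step (x : ZMod n) : Bool → ZMod n
  | false => x + 1
  | true => if x = 0 then 1 else x

/-- The state of `C_n^0` in `{1, …, n}` encoded by a residue modulo `n`. -/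
def label (x : ZMod n) : ℕ := (x - 1).val + 1

/-- The number of jumps made from `x` along a word, that is, of letters `b` read in state `0`. -/
def jumps (x : ZMod n) : List Bool → ℕ
  | [] => 0
  | l :: w => (if x = 0 ∧ l then 1 else 0) + jumps (step x l) w

section Encoding

lemma label_mem_Icc [NeZero n] (x : ZMod n) : label x ∈ Finset.Icc 1 n :=
  Finset.mem_Icc.mpr ⟨Nat.le_add_left 1 _, ZMod.val_lt (x - 1)⟩

lemma natCast_label [NeZero n] (x : ZMod n) : (label x : ZMod n) = x := by
  simp [label]

lemma label_injective [NeZero n] : Function.Injective (label : ZMod n → ℕ) :=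
  Function.LeftInverse.injective (g := Nat.cast) natCast_label

lemma label_natCast {q : ℕ} (hq : q ∈ Finset.Icc 1 n) : label (q : ZMod n) = q := by
  obtain ⟨hq₁, hqn⟩ := Finset.mem_Icc.mp hq
  rw [label, ← Nat.cast_pred hq₁, ZMod.val_natCast_of_lt (by omega)]
  omega

lemma cernyStep_zero_eq {q : ℕ} (hq : q ∈ Finset.Icc 1 n) (l : Bool) :
    cernyStep 0 n q l = some (label (step (q : ZMod n) l)) := by
  obtain ⟨hq₁, hqn⟩ := Finset.mem_Icc.mp hq
  have label_one : label (1 : ZMod n) = 1 := by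
    simpa using label_natCast (n := n) (q := 1) (Finset.mem_Icc.mpr ⟨le_rfl, hq₁.trans hqn⟩)
  rcases hqn.eq_or_lt with rfl | hlt
  · have not_le : ¬ q ≤ q - 0 - 1 := by omega
    cases l <;> simp only [cernyStep, step, if_neg not_le, if_true, CharP.cast_eq_zero, zero_add,
      label_one]
  · have hle : q ≤ n - 0 - 1 := by omega
    have cast_ne_zero : (q : ZMod n) ≠ 0 := by
      rw [Ne, ZMod.natCast_eq_zero_iff]
      exact Nat.not_dvd_of_pos_of_lt hq₁ hlt
    cases l
    · have label_succ := label_natCast (Finset.mem_Icc.mpr ⟨Nat.le_add_left 1 q, hlt⟩)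
      rw [Nat.cast_succ] at label_succ
      simp only [cernyStep, step, if_pos hle, label_succ]
    · simp only [cernyStep, step, if_pos hle, if_neg cast_ne_zero, label_natCast hq]

lemma cernyStep_zero_label [NeZero n] (x : ZMod n) (l : Bool) :
    cernyStep 0 n (label x) l = some (label (step x l)) := by
  rw [cernyStep_zero_eq (label_mem_Icc x), natCast_label]

lemma cernyRun_zero_label [NeZero n] (x : ZMod n) (w : List Bool) :
    cernyRun 0 n (label x) w = some (label (w.foldl step x)) := by
  induction w generalizing x with
  | nil => rfl
  | cons l w ih =>
    rw [cernyRun, List.foldlM_cons, cernyStep_zero_label]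
    exact ih (step x l)

lemma isSync_zero_iff [NeZero n] {w : List Bool} :
    IsSync 0 n w ↔ ∃ r : ZMod n, ∀ x, w.foldl step x = r := by
  constructor
  · rintro ⟨s, hs⟩
    have label_run (x : ZMod n) : label (w.foldl step x) = s :=
      Option.some.inj ((cernyRun_zero_label x w).symm.trans (hs _ (label_mem_Icc x)))
    exact ⟨w.foldl step 0, fun x => label_injective ((label_run x).trans (label_run 0).symm)⟩
  · rintro ⟨r, hr⟩
    refine ⟨label r, fun q hq => ?_⟩
    rw [← label_natCast hq, cernyRun_zero_label, hr]

end Encoding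

section LowerBound

lemma foldl_step_eq_add_jumps (x : ZMod n) (w : List Bool) :
    w.foldl step x = x + w.count false + jumps x w := by
  induction w generalizing x with
  | nil => simp [jumps]
  | cons l w ih =>
    rw [List.foldl_cons, ih]
    cases l with
    | false =>
      simp only [step, jumps, List.count_cons_self, Nat.cast_add, Nat.cast_one, Bool.false_eq_true,
        and_false, if_false, zero_add]
      ring
    | true =>
      by_cases hx : x = 0
      · simp only [step, jumps, hx, ne_eq, Bool.true_eq_false, not_false_eq_true,
          List.count_cons_of_ne, zero_add, and_self, if_true, Nat.cast_add, Nat.cast_one]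
        ring
      · simp [step, jumps, hx]

-- `(-x).val` is the number of letters `a` needed to bring `x` to `0`, the only state that jumps.
lemma mul_jumps_add_val_neg_le [NeZero n] (x : ZMod n) (w : List Bool) :
    n * jumps x w + (-x).val ≤ w.length + (n - 1) := by
  induction w generalizing x with
  | nil => simpa [jumps] using Nat.le_pred_of_lt (ZMod.val_lt (-x))
  | cons l w ih =>
    specialize ih (step x l)
    rw [jumps, List.length_cons, mul_add]
    cases l with
    | false =>
      have dist_le : (-x).val ≤ (-(x + 1)).val + 1 := by
        rw [neg_add']
        exact val_le_val_sub_one_add_one (-x)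
      simp only [step, Bool.false_eq_true, and_false, if_false] at ih ⊢
      omega
    | true =>
      by_cases hx : x = 0
      · simp only [step, hx, and_self, if_true, neg_zero, ZMod.val_zero, val_neg_one] at ih ⊢
        omega
      · simp only [step, hx, false_and, if_false] at ih ⊢
        omega

lemma sq_sub_one_le_length_of_isSync [NeZero n] {w : List Bool} (hw : IsSync 0 n w) :
    (n - 1) ^ 2 ≤ w.length := by
  obtain ⟨r, hr⟩ := isSync_zero_iff.mp hw
  set x : ZMod n := r - w.count false + 1 with hx
  have jumps_eq : (jumps x w : ZMod n) = -1 := by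
    have := (foldl_step_eq_add_jumps x w).symm.trans (hr x)
    linear_combination this - hx
  have jumps_ge : n - 1 ≤ jumps x w := sub_one_le_of_natCast_eq_neg_one jumps_eq
  have turns : n * (n - 1) ≤ w.length + (n - 1) :=
    calc n * (n - 1) ≤ n * jumps x w + (-x).val := le_add_right (Nat.mul_le_mul_left n jumps_ge)
      _ ≤ w.length + (n - 1) := mul_jumps_add_val_neg_le x w
  calc (n - 1) ^ 2 = n * (n - 1) - (n - 1) := by rw [sq, Nat.sub_one_mul]
    _ ≤ w.length := Nat.sub_le_of_le_add turns

end LowerBound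

section UpperBound

/-- The word `b a^(n-1)`, which moves every nonzero residue one step down and fixes `0`. -/
def descentWord (n : ℕ) : List Bool := true :: List.replicate (n - 1) false

/-- The word `(b a^(n-1))^(n-2) b`, a shortest synchronizing word of `C_n^0`. -/
def resetWord (n : ℕ) : List Bool := (List.replicate (n - 2) (descentWord n)).flatten ++ [true]

lemma length_resetWord (hn : 2 ≤ n) : (resetWord n).length = (n - 1) ^ 2 := by
  obtain ⟨m, rfl⟩ := Nat.exists_eq_add_of_le' hn
  simp only [resetWord, descentWord, List.length_append, List.length_flatten, List.map_replicate,
    List.sum_replicate, List.length_cons, List.length_replicate, List.length_nil, smul_eq_mul,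
    Nat.add_sub_cancel, Nat.add_one_sub_one]
  ring

lemma foldl_step_replicate_false (x : ZMod n) (m : ℕ) :
    (List.replicate m false).foldl step x = x + m := by
  induction m generalizing x with
  | zero => simp
  | succ m ih =>
    rw [List.replicate_succ, List.foldl_cons, ih, step]
    push_cast
    ring

lemma val_foldl_step_descentWord [NeZero n] (x : ZMod n) :
    ((descentWord n).foldl step x).val = x.val - 1 := by
  have cast_pred : ((n - 1 : ℕ) : ZMod n) = -1 := by simp [Nat.cast_pred (NeZero.pos n)]
  rw [descentWord, List.foldl_cons, foldl_step_replicate_false, cast_pred, ← sub_eq_add_neg]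
  by_cases hx : x = 0
  · simp [step, hx]
  · rw [step, if_neg hx, val_sub_one hx]

lemma val_foldl_step_flatten_replicate_descentWord [NeZero n] (x : ZMod n) (k : ℕ) :
    ((List.replicate k (descentWord n)).flatten.foldl step x).val = x.val - k := by
  induction k generalizing x with
  | zero => rfl
  | succ k ih =>
    rw [List.replicate_succ, List.flatten_cons, List.foldl_append, ih, val_foldl_step_descentWord]
    omega

lemma step_true_of_val_le_one [NeZero n] {x : ZMod n} (hx : x.val ≤ 1) : step x true = 1 := by
  rcases Nat.le_one_iff_eq_zero_or_eq_one.mp hx with h | h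
  · rw [step, if_pos ((ZMod.val_eq_zero x).mp h)]
  · have x_eq_one : x = 1 := by rw [← ZMod.natCast_zmod_val x, h, Nat.cast_one]
    rw [step, x_eq_one, ite_self]

lemma isSync_resetWord [NeZero n] : IsSync 0 n (resetWord n) := by
  refine isSync_zero_iff.mpr ⟨1, fun x => ?_⟩
  rw [resetWord, List.foldl_append]
  refine step_true_of_val_le_one ?_
  rw [val_foldl_step_flatten_replicate_descentWord]
  have := x.val_lt
  omega

end UpperBound

end Cerny

/-- **Proposition.** `f_0(n) = n - 1` for every `n ≥ 1`; consequently, the reset threshold of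
the Černý automaton `C_n^0` equals `(n-1)²` for every `n ≥ 2`. -/
theorem fc_zero_and_cerny_resetThreshold :
    (∀ n : ℕ, 1 ≤ n → fc 0 n = n - 1) ∧
    (∀ n : ℕ, 2 ≤ n → resetThreshold 0 n = (n - 1) ^ 2) := by
  refine ⟨fun n _ => fc_zero n, fun n hn => ?_⟩
  have : NeZero n := ⟨by omega⟩
  refine IsLeast.csInf_eq ⟨?_, ?_⟩
  · exact ⟨Cerny.resetWord n, Cerny.length_resetWord hn, Cerny.isSync_resetWord⟩
  · rintro _ ⟨w, rfl, hw⟩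
    exact Cerny.sq_sub_one_le_length_of_isSync hw
end

section
/- For every integer c ≥ 1 and every integer n ≥ 1, n·ln(n)/ln(φ_c) − 3cn < f_c(n) < n·ln(n)/ln(φ_c) + (c+1)n. -/
/-!
Since `(c + 1) * (i + j) - i = c * i + (c + 1) * j`, the number `fc c n` is the least total depth of
the `n` leaves of a binary tree whose left edges have length `c` and right edges length `c + 1`.

Lower bound: `φ⁻ᶜ + φ⁻⁽ᶜ⁺¹⁾ = 1`, so Gibbs' inequality makes `n * log n / log φ` grow by at most
`c * i + (c + 1) * j` when trees with `i` and `j` leaves are joined.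

Upper bound: let `L k` be the largest number of leaves of such a tree of height at most `k`. Then
`L (k + c + 1) = L (k + 1) + L k`, which gives `φ ^ (k - c) ≤ L k`, and filling trees level by level
gives `fc c n ≤ (k + 2) * n - L (k + 1)` for `L k ≤ n ≤ L (k + 1)`. When `n < L (k + 1)`, this is
less than `(k + 1) * n`, where `k ≤ log n / log φ + c`.
-/

section Recursion

variable (c : ℕ) {i j n : ℕ}

@[simp]
theorem fc_zero_s13 : fc c 0 = 0 := by rw [fc]

@[simp]
theorem fc_one : fc c 1 = 0 := by rw [fc]

theorem fc_add_le (hi : 0 < i) (hj : 0 < j) :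
    fc c (i + j) ≤ fc c i + fc c j + (c * i + (c + 1) * j) := by
  obtain ⟨m, hm⟩ : ∃ m, i + j = m + 2 := ⟨i + j - 2, by omega⟩
  have hmem : i ∈ Finset.Icc 1 (m + 1) := by rw [Finset.mem_Icc]; omega
  calc fc c (i + j) ≤ fc c i + fc c (m + 2 - i) + (c + 1) * (m + 2) - i := by
        rw [hm, fc]
        exact Finset.inf'_le _ (Finset.mem_attach _ ⟨i, hmem⟩)
    _ = fc c i + fc c j + (c * i + (c + 1) * j) := by
        rw [← hm, Nat.add_sub_cancel_left]
        exact Nat.sub_eq_of_eq_add (by ring)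

theorem exists_fc_add_eq (hn : 2 ≤ n) :
    ∃ i j, 0 < i ∧ 0 < j ∧ i + j = n ∧ fc c n = fc c i + fc c j + (c * i + (c + 1) * j) := by
  obtain ⟨m, rfl⟩ := Nat.exists_eq_add_of_le' hn
  rw [fc]
  obtain ⟨⟨i, hmem⟩, -, hmin⟩ := Finset.exists_mem_eq_inf'
    (Finset.attach_nonempty_iff.mpr ⟨1, by simp⟩)
    (fun i : Finset.Icc 1 (m + 1) => fc c i.1 + fc c (m + 2 - i.1) + (c + 1) * (m + 2) - i.1)
  rw [Finset.mem_Icc] at hmem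
  obtain ⟨j, hj⟩ : ∃ j, m + 2 = i + j := Nat.exists_eq_add_of_le (by omega)
  refine ⟨i, j, hmem.1, by omega, hj.symm, ?_⟩
  rw [hmin, hj, Nat.add_sub_cancel_left]
  exact Nat.sub_eq_of_eq_add (by ring)

end Recursion

section LowerBound

open Real

theorem mul_log_add_log_sub_log_le {x p W : ℝ} (hx : 0 ≤ x) (hp : 0 < p) (hxW : x ≤ W) :
    x * (log W + log p - log x) ≤ W * p - x := by
  obtain rfl | hx := hx.eq_or_lt
  · simpa using mul_nonneg hxW hp.le
  have hW : 0 < W := hx.trans_le hxW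
  calc x * (log W + log p - log x) = x * log (W * p / x) := by
        rw [log_div (by positivity) hx.ne', log_mul hW.ne' hp.ne']
    _ ≤ x * (W * p / x - 1) := by
        gcongr
        exact log_le_sub_one_of_pos (by positivity)
    _ = W * p - x := by field_simp

/-- Gibbs' inequality for weights `w` that are not normalised. -/
theorem sum_mul_log_sum_le {ι : Type*} (s : Finset ι) {w p : ι → ℝ} (hw : ∀ i ∈ s, 0 ≤ w i)
    (hp : ∀ i ∈ s, 0 < p i) (hp_sum : ∑ i ∈ s, p i ≤ 1) :
    (∑ i ∈ s, w i) * log (∑ i ∈ s, w i) ≤ ∑ i ∈ s, w i * (log (w i) - log (p i)) := by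
  set W := ∑ i ∈ s, w i with hW
  have hW_nonneg : 0 ≤ W := Finset.sum_nonneg hw
  rw [← sub_nonpos]
  calc W * log W - ∑ i ∈ s, w i * (log (w i) - log (p i))
      = ∑ i ∈ s, w i * (log W + log (p i) - log (w i)) := by
        rw [hW, Finset.sum_mul, ← hW, ← Finset.sum_sub_distrib]
        exact Finset.sum_congr rfl fun i _ ↦ by ring
    _ ≤ ∑ i ∈ s, (W * p i - w i) := Finset.sum_le_sum fun i hi ↦
        mul_log_add_log_sub_log_le (hw i hi) (hp i hi) (Finset.single_le_sum hw hi)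
    _ = W * (∑ i ∈ s, p i) - W := by rw [Finset.sum_sub_distrib, ← Finset.mul_sum]
    _ ≤ 0 := sub_nonpos.2 (mul_le_of_le_one_right hW_nonneg hp_sum)

theorem add_mul_log_add_le {c : ℕ} {φ x y : ℝ} (hφ_pos : 0 < φ) (hφ : φ + 1 ≤ φ ^ (c + 1))
    (hx : 0 ≤ x) (hy : 0 ≤ y) :
    (x + y) * log (x + y) ≤ x * log x + y * log y + (c * x + (c + 1) * y) * log φ := by
  have kraft : (φ ^ c)⁻¹ + (φ ^ (c + 1))⁻¹ ≤ 1 := by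
    calc (φ ^ c)⁻¹ + (φ ^ (c + 1))⁻¹ = (φ + 1) / φ ^ (c + 1) := by field_simp; ring
      _ ≤ 1 := div_le_one_of_le₀ hφ (by positivity)
  have gibbs := sum_mul_log_sum_le Finset.univ (w := ![x, y]) (p := ![(φ ^ c)⁻¹, (φ ^ (c + 1))⁻¹])
    (by simp [Fin.forall_fin_two, hx, hy]) (by simp [Fin.forall_fin_two, hφ_pos])
    (by simpa using kraft)
  simp only [Fin.sum_univ_two, Matrix.cons_val_zero, Matrix.cons_val_one, log_inv, log_pow,
    Nat.cast_add, Nat.cast_one] at gibbs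
  linarith

theorem mul_log_le_fc_mul_log {c : ℕ} {φ : ℝ} (hφ_pos : 0 < φ) (hφ : φ + 1 ≤ φ ^ (c + 1)) (n : ℕ) :
    n * log n ≤ fc c n * log φ := by
  induction n using Nat.strong_induction_on with
  | _ n ih =>
    obtain hn | hn := Nat.lt_or_ge n 2
    · interval_cases n <;> simp
    obtain ⟨i, j, hi, hj, rfl, hfc⟩ := exists_fc_add_eq c hn
    calc ((i + j : ℕ) : ℝ) * log (i + j : ℕ)
        ≤ i * log i + j * log j + (c * i + (c + 1) * j) * log φ := by
          exact_mod_cast add_mul_log_add_le hφ_pos hφ i.cast_nonneg j.cast_nonneg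
      _ ≤ fc c i * log φ + fc c j * log φ + (c * i + (c + 1) * j) * log φ := by
          gcongr ?_ + ?_ + _
          · exact ih i (by omega)
          · exact ih j (by omega)
      _ = fc c (i + j) * log φ := by rw [hfc]; push_cast; ring

end LowerBound

section LeafCount

/-- The largest number of leaves of a binary tree whose left edges have length `c`, right edges have
length `c + 1`, and leaves have depth at most `k`. For `c = 0` this number can be infinite, and the
value is `1` by convention. -/
def leafCount (c k : ℕ) : ℕ :=
  if c = 0 ∨ k ≤ c then 1 else leafCount c (k - c) + leafCount c (k - (c + 1))
termination_by k

variable {c k : ℕ}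

theorem leafCount_of_le (hk : k ≤ c) : leafCount c k = 1 := by
  rw [leafCount, if_pos (.inr hk)]

theorem leafCount_add (hc : 0 < c) (k : ℕ) :
    leafCount c (k + (c + 1)) = leafCount c (k + 1) + leafCount c k := by
  rw [leafCount, if_neg (by omega)]
  congr 2 <;> omega

theorem leafCount_pos (c k : ℕ) : 0 < leafCount c k := by
  fun_induction leafCount c k <;> omega

theorem leafCount_mono (hc : 0 < c) : Monotone (leafCount c) := by
  refine monotone_nat_of_le_succ fun k ↦ ?_
  induction k using Nat.strong_induction_on with
  | _ k ih =>
    obtain hk | hk := le_or_gt k c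
    · rw [leafCount_of_le hk]
      exact leafCount_pos c _
    · obtain ⟨m, rfl⟩ := Nat.exists_eq_add_of_le' (Nat.succ_le_of_lt hk)
      rw [leafCount_add hc, Nat.add_right_comm, leafCount_add hc]
      exact Nat.add_le_add (ih (m + 1) (by omega)) (ih m (by omega))

theorem lt_leafCount_mul (hc : 0 < c) (k : ℕ) : k < leafCount c (k * (c + 1)) := by
  induction k with
  | zero => exact leafCount_pos c _
  | succ k ih =>
    rw [Nat.succ_mul, leafCount_add hc]
    have := leafCount_pos c (k * (c + 1) + 1)
    omega

theorem exists_leafCount_le_lt {n : ℕ} (hc : 0 < c) (hn : 0 < n) :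
    ∃ k, leafCount c k ≤ n ∧ n < leafCount c (k + 1) := by
  by_contra! h
  have bounded (k : ℕ) : leafCount c k ≤ n := by
    induction k with
    | zero => rwa [leafCount_of_le c.zero_le]
    | succ k ih => exact h k ih
  exact (lt_leafCount_mul hc n).not_ge (bounded _)

theorem pow_le_leafCount_mul_pow {R : Type*} [CommSemiring R] [PartialOrder R] [IsOrderedRing R]
    {φ : R} (hc : 0 < c) (hφ_one : 1 ≤ φ) (hφ : φ ^ (c + 1) ≤ φ + 1) (k : ℕ) :
    φ ^ k ≤ leafCount c k * φ ^ c := by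
  have hφ_nonneg : 0 ≤ φ := zero_le_one.trans hφ_one
  induction k using Nat.strong_induction_on with
  | _ k ih =>
    obtain hk | hk := le_or_gt k c
    · simpa [leafCount_of_le hk] using pow_le_pow_right₀ hφ_one hk
    obtain ⟨m, rfl⟩ := Nat.exists_eq_add_of_le' (Nat.succ_le_of_lt hk)
    calc φ ^ (m + (c + 1)) = φ ^ m * φ ^ (c + 1) := pow_add ..
      _ ≤ φ ^ m * (φ + 1) := by gcongr
      _ = φ ^ (m + 1) + φ ^ m := by ring
      _ ≤ leafCount c (m + 1) * φ ^ c + leafCount c m * φ ^ c :=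
          add_le_add (ih (m + 1) (by omega)) (ih m (by omega))
      _ = leafCount c (m + (c + 1)) * φ ^ c := by rw [leafCount_add hc]; push_cast; ring

end LeafCount

section UpperBound

open Real
open scoped Pointwise

variable {c n : ℕ}

theorem fc_add_leafCount_le_of_le {k : ℕ} (hc : 0 < c) (hk : k ≤ c)
    (hn : n ∈ Set.Icc (leafCount c k) (leafCount c (k + 1))) :
    fc c n + leafCount c (k + 1) ≤ (k + 2) * n := by
  rw [leafCount_of_le hk, Set.mem_Icc] at hn
  obtain rfl | hk := hk.eq_or_lt
  · have leafCount_succ : leafCount k (k + 1) = 2 := by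
      rw [← zero_add (k + 1), leafCount_add hc, leafCount_of_le hc, leafCount_of_le k.zero_le]
    have fc_two : fc k (1 + 1) ≤ 2 * k + 1 := by
      linarith [fc_add_le k one_pos one_pos, fc_one k]
    rw [leafCount_succ] at hn ⊢
    obtain ⟨hn₁, hn₂⟩ := hn
    interval_cases n
    · simp
    · linarith
  · rw [leafCount_of_le hk] at hn ⊢
    obtain rfl : n = 1 := by omega
    simp

theorem fc_add_leafCount_le {k : ℕ} (hc : 0 < c)
    (hn : n ∈ Set.Icc (leafCount c k) (leafCount c (k + 1))) :
    fc c n + leafCount c (k + 1) ≤ (k + 2) * n := by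
  induction k using Nat.strong_induction_on generalizing n with
  | _ k ih =>
    obtain hk | hk := le_or_gt k c
    · exact fc_add_leafCount_le_of_le hc hk hn
    obtain ⟨m, rfl⟩ := Nat.exists_eq_add_of_le' (Nat.succ_le_of_lt hk)
    rw [Nat.add_right_comm, leafCount_add hc, leafCount_add hc, ← Set.Icc_add_Icc
      (leafCount_mono hc (m + 1).le_succ) (leafCount_mono hc m.le_succ)] at hn
    obtain ⟨i, hi, j, hj, rfl⟩ := hn
    calc fc c (i + j) + leafCount c (m + (c + 1) + 1)
        ≤ fc c i + fc c j + (c * i + (c + 1) * j)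
            + (leafCount c (m + 1 + 1) + leafCount c (m + 1)) := by
          rw [Nat.add_right_comm, leafCount_add hc]
          gcongr
          exact fc_add_le c ((leafCount_pos ..).trans_le hi.1) ((leafCount_pos ..).trans_le hj.1)
      _ = (fc c i + leafCount c (m + 1 + 1)) + (fc c j + leafCount c (m + 1))
            + (c * i + (c + 1) * j) := by ring
      _ ≤ (m + 1 + 2) * i + (m + 2) * j + (c * i + (c + 1) * j) := by
          gcongr
          · exact ih (m + 1) (by omega) hi
          · exact ih m (by omega) hj
      _ = (m + (c + 1) + 2) * (i + j) := by ring

theorem le_log_div_log_add_of_leafCount_le {k : ℕ} {φ : ℝ} (hc : 0 < c) (hφ_one : 1 < φ)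
    (hφ : φ ^ (c + 1) ≤ φ + 1) (hk : leafCount c k ≤ n) : k ≤ log n / log φ + c := by
  have hn : 0 < n := (leafCount_pos c k).trans_le hk
  have hpow : φ ^ k ≤ n * φ ^ c := by
    calc φ ^ k ≤ leafCount c k * φ ^ c := pow_le_leafCount_mul_pow hc hφ_one.le hφ k
      _ ≤ n * φ ^ c := by gcongr
  have hlog := log_le_log (by positivity) hpow
  rw [log_mul (by positivity) (by positivity), log_pow, log_pow] at hlog
  rwa [div_add' _ _ _ (log_pos hφ_one).ne', le_div_iff₀ (log_pos hφ_one)]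

theorem fc_lt_mul_log_div_log_add {φ : ℝ} (hc : 0 < c) (hn : 0 < n) (hφ_one : 1 < φ)
    (hφ : φ ^ (c + 1) ≤ φ + 1) : fc c n < n * log n / log φ + (c + 1) * n := by
  obtain ⟨k, hk, hk_succ⟩ := exists_leafCount_le_lt hc hn
  have hfc : fc c n < (k + 1) * n := by
    linarith [fc_add_leafCount_le hc ⟨hk, hk_succ.le⟩]
  calc (fc c n : ℝ) < (k + 1) * n := by exact_mod_cast hfc
    _ ≤ (log n / log φ + c + 1) * n := by
        gcongr
        exact le_log_div_log_add_of_leafCount_le hc hφ_one hφ hk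
    _ = n * log n / log φ + (c + 1) * n := by ring

end UpperBound

/-- **Proposition.** For every `c ≥ 1` and `n ≥ 1`, with `φ_c` the unique real `x > 1` such that
`x^{c+1} - x - 1 = 0`, we have `n·ln(n)/ln(φ_c) - 3cn < f_c(n) < n·ln(n)/ln(φ_c) + (c+1)n`. -/
theorem fc_phi_bounds (c n : ℕ) (hc : 1 ≤ c) (hn : 1 ≤ n)
    (φ : ℝ) (hφ1 : 1 < φ) (hφ : φ ^ (c + 1) - φ - 1 = 0) :
    (n : ℝ) * Real.log (n : ℝ) / Real.log φ - 3 * (c : ℝ) * (n : ℝ) < (fc c n : ℝ) ∧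
    (fc c n : ℝ) < (n : ℝ) * Real.log (n : ℝ) / Real.log φ + ((c : ℝ) + 1) * (n : ℝ) := by
  have hroot : φ ^ (c + 1) = φ + 1 := by linarith
  constructor
  · have lower : n * Real.log n / Real.log φ ≤ fc c n :=
      (div_le_iff₀ (Real.log_pos hφ1)).2 (mul_log_le_fc_mul_log (zero_lt_one.trans hφ1) hroot.ge n)
    have : (0 : ℝ) < 3 * c * n := by positivity
    linarith
  · exact fc_lt_mul_log_div_log_add hc hn hφ1 hroot.le
end
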